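/- arXiv:2307.00543 — 2 statements merged into one kernel-verified Lean document; each statement's English description precedes it below -/
import Mathlib

section
/- Let γ_v > 0 be the number of tokens a voter must stake, and let g : [0,1] → ℝ be the payoff of a malicious voter as a function of the fraction r of malicious voters among the selected voters, given by g(r) = −γ_v for r < 1/2 and g(r) = ((1−r)/r)·γ_v for r ≥ 1/2. Then the expected return of a malicious voter when r is uniformly distributed on [0,1], namely R = ∫₀^{1/2} (−γ_v) dr + ∫_{1/2}^{1} ((1−r)/r)·γ_v dr, is strictly negative. -/
/-!
If the malicious voters win above a fraction `θ` of the selected voters instead of `1 / 2`, their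
expected return is `-(1 + log θ) * γ_v`. The break-even threshold is thus `1 / e`, which lies
below `1 / 2` because `e > 2`.
-/

theorem integral_const_sub_id_div_id {a b : ℝ} (c : ℝ) (h : (0 : ℝ) ∉ Set.uIcc a b) :
    ∫ x in a..b, (c - x) / x = c * Real.log (b / a) - (b - a) := by
  have ne_zero : ∀ x ∈ Set.uIcc a b, x ≠ 0 := fun x hx => ne_of_mem_of_not_mem hx h
  calc ∫ x in a..b, (c - x) / x
      = ∫ x in a..b, (c * (1 / x) - 1) :=
        intervalIntegral.integral_congr fun x hx => by
          have := ne_zero x hx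
          field_simp
    _ = c * Real.log (b / a) - (b - a) := by
        rw [intervalIntegral.integral_sub
            ((intervalIntegral.intervalIntegrable_one_div ne_zero continuousOn_id).const_mul c)
            intervalIntegrable_const,
          intervalIntegral.integral_const_mul, integral_one_div h, integral_one]

theorem malicious_voter_expected_return_eq (γv : ℝ) {θ : ℝ} (hθ : 0 < θ) :
    (∫ _r in (0 : ℝ)..θ, (-γv)) + (∫ r in θ..1, ((1 - r) / r) * γv) =
      -(1 + Real.log θ) * γv := by
  rw [intervalIntegral.integral_const, intervalIntegral.integral_mul_const,
    integral_const_sub_id_div_id 1 (Set.notMem_uIcc_of_lt hθ one_pos), one_div, Real.log_inv,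
    smul_eq_mul]
  ring

theorem malicious_voter_expected_return_neg_general {γv θ : ℝ} (hγ : 0 < γv)
    (hθ : Real.exp (-1) < θ) :
    (∫ _r in (0 : ℝ)..θ, (-γv)) + (∫ r in θ..1, ((1 - r) / r) * γv) < 0 := by
  have θ_pos : 0 < θ := (Real.exp_pos _).trans hθ
  have log_gt : -1 < Real.log θ := (Real.lt_log_iff_exp_lt θ_pos).mpr hθ
  rw [malicious_voter_expected_return_eq γv θ_pos]
  exact mul_neg_of_neg_of_pos (by linarith) hγ

/-- The expected return of a malicious voter, with payoff `-γ_v` for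
malicious fraction `r < 1/2` and `((1-r)/r) * γ_v` for `r ≥ 1/2`,
integrated over `r` uniform on `[0,1]`, is strictly negative. -/
theorem malicious_voter_expected_return_neg (γv : ℝ) (hγ : 0 < γv) :
    (∫ _r in (0:ℝ)..(1/2), (-γv)) + (∫ r in (1/2:ℝ)..1, ((1 - r) / r) * γv) < 0 :=
  malicious_voter_expected_return_neg_general hγ Real.exp_neg_one_lt_half
end

section
/- For γ_v > 0, the expected gain of a malicious voter over the winning region, ∫_{1/2}^{1} ((1−r)/r)·γ_v dr = (log 2 − 1/2)·γ_v, is strictly smaller than its expected loss over the losing region, ∫₀^{1/2} γ_v dr = γ_v/2. -/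
theorem integral_const_sub_div_self {a b : ℝ} (c : ℝ) (h : (0 : ℝ) ∉ Set.uIcc a b) :
    ∫ r in a..b, (c - r) / r = c * Real.log (b / a) - (b - a) := by
  have integrand_eq : Set.EqOn (fun r : ℝ ↦ (c - r) / r) (fun r ↦ c * r⁻¹ - 1) (Set.uIcc a b) :=
    fun r hr ↦ by
      have hr₀ : r ≠ 0 := ne_of_mem_of_not_mem hr h
      simp only [sub_div, div_self hr₀, div_eq_mul_inv c r]
  have inv_integrable : IntervalIntegrable (fun r : ℝ ↦ r⁻¹) MeasureTheory.volume a b :=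
    intervalIntegrable_inv_iff.mpr (.inr h)
  calc ∫ r in a..b, (c - r) / r
      = ∫ r in a..b, (c * r⁻¹ - 1) := intervalIntegral.integral_congr integrand_eq
    _ = (∫ r in a..b, c * r⁻¹) - ∫ _r in a..b, (1 : ℝ) :=
        intervalIntegral.integral_sub (inv_integrable.const_mul c) intervalIntegrable_const
    _ = c * Real.log (b / a) - (b - a) := by
        rw [intervalIntegral.integral_const_mul, integral_inv h, integral_one]

/-- For `γ_v > 0`, the expected gain of a malicious voter over the winning region,
`∫_{1/2}^{1} ((1-r)/r) γ_v dr = (log 2 - 1/2) γ_v`, is strictly smaller than its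
expected loss over the losing region, `∫_0^{1/2} γ_v dr = γ_v / 2`. -/
theorem expected_gain_lt_expected_loss (γv : ℝ) (hγ : 0 < γv) :
    (∫ r in (1/2:ℝ)..1, ((1 - r) / r) * γv) = (Real.log 2 - 1/2) * γv ∧
    (∫ _r in (0:ℝ)..(1/2), γv) = γv / 2 ∧
    (∫ r in (1/2:ℝ)..1, ((1 - r) / r) * γv) < ∫ _r in (0:ℝ)..(1/2), γv := by
  have gain_eq : (∫ r in (1/2:ℝ)..1, ((1 - r) / r) * γv) = (Real.log 2 - 1/2) * γv := by
    have zero_notMem : (0 : ℝ) ∉ Set.uIcc (1/2) 1 :=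
      Set.notMem_uIcc_of_lt one_half_pos one_pos
    rw [intervalIntegral.integral_mul_const, integral_const_sub_div_self 1 zero_notMem]
    norm_num
  have loss_eq : (∫ _r in (0:ℝ)..(1/2), γv) = γv / 2 := by
    rw [intervalIntegral.integral_const, smul_eq_mul]
    ring
  have log_two_lt_one : Real.log 2 < 1 := by
    linarith [Real.log_lt_sub_one_of_pos two_pos (OfNat.ofNat_ne_one 2)]
  refine ⟨gain_eq, loss_eq, ?_⟩
  calc ∫ r in (1/2:ℝ)..1, ((1 - r) / r) * γv
      = (Real.log 2 - 1/2) * γv := gain_eq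
    _ < (1 - 1/2) * γv := by gcongr
    _ = γv / 2 := by ring
    _ = ∫ _r in (0:ℝ)..(1/2), γv := loss_eq.symm
end
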